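/- arXiv:1511.01132 — 3 statements merged into one kernel-verified Lean document; each statement's English description precedes it below -/
import Mathlib

section
/- (Second price deviation lemma) In a simultaneous second price auction, fix a set S ⊆ [m] and a bidder i with a fractionally subadditive valuation v_i, budget B_i ≥ 0, and v_i(S) > 0, and let a_r be an additive valuation from i's XOS family that is maximizing for S (v_i(S) = Σ_{j∈S} a_r({j})). Define the deviation b*_i by b*_{ij} = a_r({j}) · min{v_i(S), B_i} / v_i(S) for j ∈ S and b*_{ij} = 0 for j ∉ S. Then for every profile b_{-i} of the other bidders' bids, u_i(b*_i, b_{-i}) ≥ min{v_i(S), B_i} − Σ_{j∈S} max_{k≠i} b_{kj}. -/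
/-!
Second price deviation lemma: in a simultaneous second price auction, a bidder
`i` with XOS valuation deviating to `b*_{ij} = a_r(j) · min{v_i(S), B_i}/v_i(S)`
on items of `S` (and `0` elsewhere) derives utility at least
`min{v_i(S), B_i} − Σ_{j∈S} max_{k≠i} b_{kj}`.
-/

open Finset

/-- `v` is fractionally subadditive (XOS): the pointwise maximum of a finite
nonempty family of (nonnegative) additive valuations. -/
def IsXOS {m : ℕ} (v : Finset (Fin m) → ℝ) : Prop :=
  ∃ (k : ℕ) (a : Fin (k + 1) → Fin m → ℝ),
    (∀ t j, 0 ≤ a t j) ∧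
    ∀ S : Finset (Fin m),
      v S = (Finset.univ : Finset (Fin (k + 1))).sup'
        ⟨0, Finset.mem_univ 0⟩ (fun t => ∑ j ∈ S, a t j)

/-- A simultaneous second price auction on `m` indivisible items with `n` bidders:
monotone normalized valuations `v i`, budgets `B i ≥ 0`, and a deterministic
allocation rule `win` awarding every item to a bidder with the highest bid on it;
the winner of an item pays the highest competing bid on it. -/
structure ItemAuctionSP (n m : ℕ) where
  v : Fin n → Finset (Fin m) → ℝ
  v_empty : ∀ i, v i ∅ = 0
  v_mono : ∀ i (S T : Finset (Fin m)), S ⊆ T → v i S ≤ v i T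
  B : Fin n → ℝ
  B_nonneg : ∀ i, 0 ≤ B i
  win : (Fin n → Fin m → ℝ) → Fin m → Fin n
  win_max : ∀ (b : Fin n → Fin m → ℝ) (j : Fin m) (i : Fin n), b i j ≤ b (win b j) j
  win_strict : ∀ (b : Fin n → Fin m → ℝ) (j : Fin m) (i : Fin n),
    (∀ k, k ≠ i → b k j < b i j) → win b j = i

namespace ItemAuctionSP

variable {n m : ℕ}

/-- The highest competing bid `max_{k ≠ i} b_{kj}` (bids are nonnegative). -/
noncomputable def maxOther (b : Fin n → Fin m → ℝ) (i : Fin n) (j : Fin m) : ℝ :=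
  Finset.fold max 0 (fun k => b k j) (univ.erase i)

/-- The set of items bidder `i` wins under profile `b`. -/
def won (A : ItemAuctionSP n m) (i : Fin n) (b : Fin n → Fin m → ℝ) : Finset (Fin m) :=
  univ.filter fun j => A.win b j = i

/-- Second-price payment of bidder `i`: the highest competing bid on each item won. -/
noncomputable def pay (A : ItemAuctionSP n m) (i : Fin n) (b : Fin n → Fin m → ℝ) : ℝ :=
  ∑ j ∈ A.won i b, maxOther b i j

/-- Quasilinear utility of bidder `i`. -/
noncomputable def util (A : ItemAuctionSP n m) (i : Fin n) (b : Fin n → Fin m → ℝ) : ℝ :=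
  A.v i (A.won i b) - A.pay i b

/-- Liquid Welfare of a pure bid profile. -/
noncomputable def LW (A : ItemAuctionSP n m) (b : Fin n → Fin m → ℝ) : ℝ :=
  ∑ i, min (A.v i (A.won i b)) (A.B i)

/-- No over-bidding: `Σ_{j∈S} b_{ij} ≤ v_i(S)` for every set `S`. -/
def NoOverbid (A : ItemAuctionSP n m) (i : Fin n) (bi : Fin m → ℝ) : Prop :=
  ∀ S : Finset (Fin m), ∑ j ∈ S, bi j ≤ A.v i S

/-- No over-budgeting: bids sum to at most the budget. -/
def NoOverbudget (A : ItemAuctionSP n m) (i : Fin n) (bi : Fin m → ℝ) : Prop :=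
  (∑ j : Fin m, bi j) ≤ A.B i

end ItemAuctionSP

/-!
Bidder `i` wins only items on which her bid is at least the highest competing bid and loses only
items on which it is at most that. So, for nonnegative bids, the won set maximizes the surplus
`∑ j ∈ S, (b i j - max_{k ≠ i} b k j)` over `S`, and if `i` does not over-bid, her utility is at
least the surplus of the won set. The deviation in question rescales the additive valuation `a` on
`S` by `min (v S) B / v S ∈ [0, 1]`, so it does not over-bid, and it sums to `min (v S) B` on `S`.
-/

namespace ItemAuctionSP

variable {n m : ℕ} (A : ItemAuctionSP n m) {i : Fin n} {j : Fin m} {S : Finset (Fin m)}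
  {b : Fin n → Fin m → ℝ}

theorem v_nonneg (i : Fin n) (T : Finset (Fin m)) : 0 ≤ A.v i T :=
  A.v_empty i ▸ A.v_mono i ∅ T T.empty_subset

theorem maxOther_update (b : Fin n → Fin m → ℝ) (i : Fin n) (s : Fin m → ℝ) :
    maxOther (Function.update b i s) i = maxOther b i := by
  funext j
  exact fold_congr fun k hk => by rw [Function.update_of_ne (ne_of_mem_erase hk)]

theorem maxOther_le_of_win_eq (hwin : A.win b j = i) (hbid : 0 ≤ b i j) :
    maxOther b i j ≤ b i j :=
  (fold_max_le _).2 ⟨hbid, fun k _ => hwin ▸ A.win_max b j k⟩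

theorem le_maxOther_of_win_ne (hlose : A.win b j ≠ i) : b i j ≤ maxOther b i j :=
  (le_fold_max _).2 <| .inr ⟨A.win b j, mem_erase.2 ⟨hlose, mem_univ _⟩, A.win_max b j i⟩

theorem sum_sub_maxOther_le_sum_won (hbid : ∀ j ∉ S, 0 ≤ b i j) :
    ∑ j ∈ S, (b i j - maxOther b i j) ≤ ∑ j ∈ A.won i b, (b i j - maxOther b i j) := by
  have hlost : ∀ j ∈ S \ A.won i b, b i j - maxOther b i j ≤ 0 := fun j hj =>
    sub_nonpos.2 <| A.le_maxOther_of_win_ne fun hwin =>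
      (mem_sdiff.1 hj).2 (mem_filter.2 ⟨mem_univ j, hwin⟩)
  have hwon : ∀ j ∈ A.won i b \ S, 0 ≤ b i j - maxOther b i j := fun j hj =>
    sub_nonneg.2 <| A.maxOther_le_of_win_eq (mem_filter.1 (mem_sdiff.1 hj).1).2
      (hbid j (mem_sdiff.1 hj).2)
  exact sum_sdiff_le_sum_sdiff.1 ((sum_nonpos hlost).trans (sum_nonneg hwon))

theorem NoOverbid.sum_sub_maxOther_le_util {A : ItemAuctionSP n m} (h : A.NoOverbid i (b i))
    (hbid : ∀ j ∉ S, 0 ≤ b i j) :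
    ∑ j ∈ S, (b i j - maxOther b i j) ≤ A.util i b :=
  calc ∑ j ∈ S, (b i j - maxOther b i j)
      ≤ ∑ j ∈ A.won i b, (b i j - maxOther b i j) := A.sum_sub_maxOther_le_sum_won hbid
    _ = ∑ j ∈ A.won i b, b i j - A.pay i b := sum_sub_distrib _ _
    _ ≤ A.util i b := sub_le_sub_right (h _) _

theorem noOverbid_piecewise_smul {a : Fin m → ℝ} {c : ℝ} (hc₀ : 0 ≤ c) (hc₁ : c ≤ 1)
    (ha : ∀ T ⊆ S, ∑ j ∈ T, a j ≤ A.v i T) : A.NoOverbid i (S.piecewise (c • a) 0) := fun T =>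
  calc ∑ j ∈ T, S.piecewise (c • a) 0 j
      = c * ∑ j ∈ T ∩ S, a j := by simp [sum_piecewise, mul_sum]
    _ ≤ c * A.v i (T ∩ S) := mul_le_mul_of_nonneg_left (ha _ inter_subset_right) hc₀
    _ ≤ A.v i (T ∩ S) := mul_le_of_le_one_left (A.v_nonneg i _) hc₁
    _ ≤ A.v i T := A.v_mono i _ _ inter_subset_left

theorem sub_sum_maxOther_le_util_update_piecewise_smul {a : Fin m → ℝ} {c : ℝ} (hc₀ : 0 ≤ c)
    (hc₁ : c ≤ 1) (ha : ∀ T ⊆ S, ∑ j ∈ T, a j ≤ A.v i T) (b : Fin n → Fin m → ℝ) :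
    c * ∑ j ∈ S, a j - ∑ j ∈ S, maxOther b i j ≤
      A.util i (Function.update b i (S.piecewise (c • a) 0)) := by
  set s := S.piecewise (c • a) 0 with hs
  have hbid : A.NoOverbid i (Function.update b i s i) := by
    simpa only [Function.update_self] using A.noOverbid_piecewise_smul hc₀ hc₁ ha
  have hoff : ∀ j ∉ S, 0 ≤ Function.update b i s i j := fun j hj => by
    simp [hs, hj]
  have hsum : ∑ j ∈ S, s j = c * ∑ j ∈ S, a j := by
    simp [hs, sum_piecewise, mul_sum]
  simpa only [Function.update_self, maxOther_update, sum_sub_distrib, hsum]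
    using hbid.sum_sub_maxOther_le_util hoff

end ItemAuctionSP

-- For negative competing bids, `maxOther` is their maximum floored at `0`.
theorem second_price_deviation_lemma_general {n m : ℕ} (A : ItemAuctionSP n m)
    (i : Fin n) (S : Finset (Fin m)) (a : Fin m → ℝ)
    (ha_dom : ∀ T ⊆ S, ∑ j ∈ T, a j ≤ A.v i T)
    (ha_max : A.v i S = ∑ j ∈ S, a j)
    (hvS : 0 < A.v i S)
    (b : Fin n → Fin m → ℝ) (bstar : Fin m → ℝ)
    (hbstar : ∀ j, bstar j =
      if j ∈ S then a j * min (A.v i S) (A.B i) / A.v i S else 0) :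
    A.util i (Function.update b i bstar) ≥
      min (A.v i S) (A.B i) - ∑ j ∈ S, ItemAuctionSP.maxOther b i j := by
  set c := min (A.v i S) (A.B i) / A.v i S with hc
  have hc₀ : 0 ≤ c := div_nonneg (le_min hvS.le (A.B_nonneg i)) hvS.le
  have hc₁ : c ≤ 1 := (div_le_one hvS).2 (min_le_left _ _)
  have hscale : c * ∑ j ∈ S, a j = min (A.v i S) (A.B i) := by
    rw [← ha_max, hc, div_mul_cancel₀ _ hvS.ne']
  have hbid : bstar = S.piecewise (c • a) 0 := funext fun j => by
    rw [hbstar, mul_div_assoc, mul_comm, ← hc]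
    rfl
  rw [hbid, ← hscale]
  exact A.sub_sum_maxOther_le_util_update_piecewise_smul hc₀ hc₁ ha_dom b

/-- **Second price deviation lemma.**  `a` is an additive valuation from bidder
`i`'s XOS family (`∀ T, Σ_{j∈T} a j ≤ v_i(T)`) maximizing for `S`
(`v_i(S) = Σ_{j∈S} a j`).  Deviating to
`b*_{ij} = a j · min{v_i(S), B_i}/v_i(S)` on `j ∈ S` (and `0` elsewhere)
guarantees `u_i(b*, b_{-i}) ≥ min{v_i(S), B_i} − Σ_{j∈S} max_{k≠i} b_{kj}`. -/
theorem second_price_deviation_lemma {n m : ℕ} (A : ItemAuctionSP n m)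
    (i : Fin n) (S : Finset (Fin m))
    (a : Fin m → ℝ) (ha_nonneg : ∀ j, 0 ≤ a j)
    (ha_dom : ∀ T : Finset (Fin m), ∑ j ∈ T, a j ≤ A.v i T)
    (ha_max : A.v i S = ∑ j ∈ S, a j)
    (hvS : 0 < A.v i S)
    (b : Fin n → Fin m → ℝ) (hb_nonneg : ∀ k j, 0 ≤ b k j)
    (bstar : Fin m → ℝ)
    (hbstar : ∀ j, bstar j =
      if j ∈ S then a j * min (A.v i S) (A.B i) / A.v i S else 0) :
    A.util i (Function.update b i bstar) ≥
      min (A.v i S) (A.B i) - ∑ j ∈ S, ItemAuctionSP.maxOther b i j :=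
  second_price_deviation_lemma_general A i S a (fun T _ => ha_dom T) ha_max hvS b bstar hbstar
end

section
/- For every integer n ≥ 5 there exist a simultaneous first price auction with n bidders, n indivisible items, additive valuations, budgets, and a deterministic tie-breaking rule, together with a mixed Nash equilibrium σ, such that OPT ≥ (n/2) · LW(σ); that is, with a deterministic tie-breaking rule the Liquid Price of Anarchy over mixed Nash equilibria is Ω(n). -/
/-!
With a deterministic tie-breaking rule, there are simultaneous first price
auction games (with indivisible items, additive valuations and budgets) whose
mixed Nash equilibria have Liquid Price of Anarchy `Ω(n)`: for every `n ≥ 5`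
there is such a game with `n` bidders and `n` items and a mixed Nash equilibrium
`σ` with `OPT ≥ (n/2) · LW(σ)`.
-/

open Finset

/-- A simultaneous first price auction on `m` indivisible items with `n` additive
budgeted bidders and a deterministic tie-breaking rule: each item with a positive
bid is awarded to a bidder with the highest bid on it, items with all-zero bids
remain unallocated, and each winner pays her own bid. -/
structure DetAuction (n m : ℕ) where
  v : Fin n → Fin m → ℝ
  v_nonneg : ∀ i j, 0 ≤ v i j
  B : Fin n → ℝ
  B_nonneg : ∀ i, 0 ≤ B i
  win : (Fin n → Fin m → ℝ) → Fin m → Option (Fin n)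
  win_max : ∀ (b : Fin n → Fin m → ℝ) (j : Fin m) (i : Fin n),
    win b j = some i → ∀ k, b k j ≤ b i j
  win_pos : ∀ (b : Fin n → Fin m → ℝ) (j : Fin m), (∃ i, 0 < b i j) → (win b j).isSome
  win_zero : ∀ (b : Fin n → Fin m → ℝ) (j : Fin m), (∀ i, b i j = 0) → win b j = none

namespace DetAuction

variable {n m : ℕ}

/-- Value bidder `i` derives under profile `b`. -/
noncomputable def val (A : DetAuction n m) (i : Fin n) (b : Fin n → Fin m → ℝ) : ℝ :=
  ∑ j : Fin m, if A.win b j = some i then A.v i j else 0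

/-- First-price payment of bidder `i`. -/
noncomputable def pay (A : DetAuction n m) (i : Fin n) (b : Fin n → Fin m → ℝ) : ℝ :=
  ∑ j : Fin m, if A.win b j = some i then b i j else 0

/-- Quasilinear utility of bidder `i`. -/
noncomputable def util (A : DetAuction n m) (i : Fin n) (b : Fin n → Fin m → ℝ) : ℝ :=
  A.val i b - A.pay i b

end DetAuction

/-- A mixed bid profile: a product distribution, bidder `i` placing probability
`p i k` on the (nonnegative) bid vector `β i k`, with finite support `Fin (K i)`. -/
structure MixedProfile (n m : ℕ) where
  K : Fin n → ℕ
  p : ∀ i, Fin (K i) → ℝ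
  p_nonneg : ∀ i k, 0 ≤ p i k
  p_sum : ∀ i, ∑ k, p i k = 1
  β : ∀ i, Fin (K i) → Fin m → ℝ
  β_nonneg : ∀ i k j, 0 ≤ β i k j

namespace MixedProfile

variable {n m : ℕ}

/-- Probability of a sample point of the product distribution. -/
noncomputable def prob (σ : MixedProfile n m) (ω : ∀ i, Fin (σ.K i)) : ℝ :=
  ∏ i, σ.p i (ω i)

/-- The pure bid profile realized at sample point `ω`. -/
def bids (σ : MixedProfile n m) (ω : ∀ i, Fin (σ.K i)) : Fin n → Fin m → ℝ :=
  fun i => σ.β i (ω i)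

end MixedProfile

/-- `σ` is a mixed Nash equilibrium: payments stay within budgets almost surely,
and no bidder can profit in expectation by deviating to any deterministic
nonnegative bid vector whose bids sum to at most her budget. -/
def IsMixedNash {n m : ℕ} (A : DetAuction n m) (σ : MixedProfile n m) : Prop :=
  (∀ i (ω : ∀ i, Fin (σ.K i)), σ.prob ω ≠ 0 → A.pay i (σ.bids ω) ≤ A.B i) ∧
  ∀ i (b' : Fin m → ℝ), (∀ j, 0 ≤ b' j) → (∑ j : Fin m, b' j) ≤ A.B i →
    (∑ ω : ∀ i, Fin (σ.K i), σ.prob ω * A.util i (σ.bids ω)) ≥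
      ∑ ω : ∀ i, Fin (σ.K i), σ.prob ω * A.util i (Function.update (σ.bids ω) i b')

/-- Expected Liquid Welfare of a mixed profile. -/
noncomputable def LW {n m : ℕ} (A : DetAuction n m) (σ : MixedProfile n m) : ℝ :=
  ∑ i, ∑ ω : ∀ i, Fin (σ.K i), σ.prob ω * min (A.val i (σ.bids ω)) (A.B i)

/-!
Bidders `i ≠ 0` all bid their whole budget `1` on one precious item, and bidder `0`, who values
nothing, places on it a losing bid drawn uniformly from `0, 1/n, …, (n-1)/n`. The deterministic
tie-breaking rule reads this bid as a lottery ticket: the bid `i/n` breaks the tie in favour of `i`.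
Each bidder `i ≠ 0` thus wins the precious item, worth `n + 1` to her, with probability at least
`1/n`, so her expected utility is at least `1`. A deviation bidding less than `1` on it never
wins it, because some other bidder still bids `1`, and the remaining items are worth only `1` to
her; a deviation bidding `1` on it exhausts her budget and is the equilibrium bid. The
equilibrium sells one item, for a liquid welfare of `1`, while giving item `i` to bidder `i` has
liquid welfare `n - 1`.
-/

theorem eq_single_of_sum_le {ι R : Type*} [Fintype ι] [DecidableEq ι] [AddCommGroup R]
    [PartialOrder R] [IsOrderedAddMonoid R] {f : ι → R} {i : ι} {c : R} (hf : ∀ j, 0 ≤ f j)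
    (hsum : ∑ j, f j ≤ c) (hi : c ≤ f i) : f = Pi.single i c := by
  have hsplit : f i + ∑ j ∈ univ.erase i, f j = ∑ j, f j := add_sum_erase _ _ (mem_univ i)
  have hfi : f i = c := (single_le_sum (fun j _ ↦ hf j) (mem_univ i)).trans hsum |>.antisymm hi
  have hrest : ∑ j ∈ univ.erase i, f j = 0 :=
    (sum_nonneg fun j _ ↦ hf j).antisymm' <| by
      rwa [← hsplit, hfi, add_le_iff_nonpos_right] at hsum
  rw [sum_eq_zero_iff_of_nonneg fun j _ ↦ hf j] at hrest
  funext j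
  obtain rfl | hj := eq_or_ne j i
  · rw [Pi.single_eq_same, hfi]
  · rw [Pi.single_eq_of_ne hj, hrest j (mem_erase.2 ⟨hj, mem_univ j⟩)]

section Argmax

variable {ι α : Type*} [Finite ι] [LinearOrder α]

open Classical in
/-- A maximizer of `c`, with ties broken in favour of `a`: it is `a` itself whenever `a` maximizes
`c`, and an arbitrary maximizer otherwise. -/
noncomputable def argmaxFavoring (a : ι) (c : ι → α) : ι :=
  have : Nonempty ι := ⟨a⟩
  if ∀ k, c k ≤ c a then a else (Finite.exists_max c).choose

theorem le_argmaxFavoring (a : ι) (c : ι → α) (k : ι) : c k ≤ c (argmaxFavoring a c) := by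
  have : Nonempty ι := ⟨a⟩
  unfold argmaxFavoring
  split_ifs with h
  · exact h k
  · exact (Finite.exists_max c).choose_spec k

theorem argmaxFavoring_eq {a : ι} {c : ι → α} (h : ∀ k, c k ≤ c a) : argmaxFavoring a c = a :=
  if_pos h

end Argmax

namespace DetAuction

variable {n m : ℕ} (A : DetAuction n m) {i k : Fin n} {j₀ : Fin m} {b : Fin n → Fin m → ℝ}

theorem win_ne_some_of_lt (h : b i j₀ < b k j₀) : A.win b j₀ ≠ some i :=
  fun hwin ↦ (A.win_max b j₀ i hwin k).not_gt h

theorem pay_le_sum (hb : ∀ j, 0 ≤ b i j) : A.pay i b ≤ ∑ j, b i j :=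
  sum_le_sum fun j _ ↦ by split_ifs; exacts [le_rfl, hb j]

theorem util_eq_sum (i : Fin n) (b : Fin n → Fin m → ℝ) :
    A.util i b = ∑ j, if A.win b j = some i then A.v i j - b i j else 0 := by
  simp only [util, val, pay, ← sum_sub_distrib, ite_sub_ite, sub_zero]

theorem util_le_sum {s : Finset (Fin m)} (hb : ∀ j, 0 ≤ b i j)
    (hs : ∀ j ∉ s, A.win b j ≠ some i) : A.util i b ≤ ∑ j ∈ s, A.v i j := by
  rw [util_eq_sum, ← sum_subset (subset_univ s) fun j _ hj ↦ if_neg (hs j hj)]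
  refine sum_le_sum fun j _ ↦ ?_
  split_ifs
  · exact sub_le_self _ (hb j)
  · exact A.v_nonneg i j

theorem val_eq_of_unsold (h : ∀ j ≠ j₀, A.win b j = none) (i : Fin n) :
    A.val i b = if A.win b j₀ = some i then A.v i j₀ else 0 :=
  Fintype.sum_eq_single j₀ fun j hj ↦ by simp [h j hj]

theorem util_eq_of_unsold (h : ∀ j ≠ j₀, A.win b j = none) (i : Fin n) :
    A.util i b = if A.win b j₀ = some i then A.v i j₀ - b i j₀ else 0 := by
  rw [util_eq_sum]
  exact Fintype.sum_eq_single j₀ fun j hj ↦ by simp [h j hj]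

end DetAuction

namespace MixedProfile

variable {n m : ℕ} (σ : MixedProfile n m)

theorem prob_nonneg (ω : ∀ i, Fin (σ.K i)) : 0 ≤ σ.prob ω :=
  prod_nonneg fun i _ ↦ σ.p_nonneg i (ω i)

theorem sum_prob_mul_mono {f g : (∀ i, Fin (σ.K i)) → ℝ} (h : ∀ ω, f ω ≤ g ω) :
    ∑ ω, σ.prob ω * f ω ≤ ∑ ω, σ.prob ω * g ω :=
  sum_le_sum fun ω _ ↦ mul_le_mul_of_nonneg_left (h ω) (σ.prob_nonneg ω)

theorem sum_prob_mul_apply (i : Fin n) (f : Fin (σ.K i) → ℝ) :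
    ∑ ω, σ.prob ω * f (ω i) = ∑ k, σ.p i k * f k := by
  -- Absorb `f` into the `i`-th factor, so that the sum of products is a product of sums.
  let q : ∀ l, Fin (σ.K l) → ℝ := Function.update σ.p i fun k ↦ σ.p i k * f k
  have hprod (ω : ∀ l, Fin (σ.K l)) : ∏ l, q l (ω l) = σ.prob ω * f (ω i) := by
    rw [prob, Fintype.prod_eq_mul_prod_compl i, Fintype.prod_eq_mul_prod_compl i, mul_right_comm]
    congr 1
    · simp [q]
    · exact prod_congr rfl fun l hl ↦ by simp [q, Function.update_of_ne (by simpa using hl)]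
  calc ∑ ω, σ.prob ω * f (ω i) = ∏ l, ∑ k, q l k := by simp only [← hprod, Fintype.prod_sum]
    _ = ∑ k, q i k := Fintype.prod_eq_single i fun l hl ↦ by
      simp [q, Function.update_of_ne hl, σ.p_sum]
    _ = ∑ k, σ.p i k * f k := by simp [q]

theorem sum_prob : ∑ ω, σ.prob ω = 1 := by
  simp only [prob, ← Fintype.prod_sum, σ.p_sum, prod_const_one]

theorem sum_prob_mul_const (c : ℝ) : ∑ ω, σ.prob ω * c = c := by
  rw [← sum_mul, sum_prob, one_mul]

end MixedProfile

theorem LW_eq_of_forall {n m : ℕ} {A : DetAuction n m} {σ : MixedProfile n m} {c : ℝ}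
    (h : ∀ ω, ∑ i, min (A.val i (σ.bids ω)) (A.B i) = c) : LW A σ = c := by
  rw [LW, sum_comm]
  simp only [← mul_sum, h, σ.sum_prob_mul_const]

namespace TicketAuction

variable {n : ℕ}

/-- The bid by which bidder `0` names bidder `k`, kept below `1` so that it never
wins against a bidder who exhausts her budget. -/
noncomputable def ticket (k : Fin n) : ℝ := k / n

theorem ticket_nonneg (k : Fin n) : 0 ≤ ticket k := by
  unfold ticket
  positivity

variable [NeZero n]

theorem ticket_lt_one (k : Fin n) : ticket k < 1 := by
  rw [ticket, div_lt_one (by simp [NeZero.pos n])]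
  exact_mod_cast k.isLt

theorem ticket_injective : Function.Injective (ticket (n := n)) := fun k l h ↦ by
  simpa [ticket, div_left_inj' (NeZero.ne (n : ℝ)), Fin.ext_iff] using h

open Classical in
variable (n) in
/-- The auction of the lower bound, with unit budgets. Item `0` is worth `n + 1` to every bidder
except bidder `0`, who values nothing; item `i ≠ 0` is worth `1` to bidder `i` only. On every
item, ties are broken in favour of the bidder named by the bid of bidder `0`; a bid that
is not a ticket names an arbitrary bidder. -/
noncomputable def auction : DetAuction n n where
  v i j := if i = 0 then 0 else if j = 0 then n + 1 else if j = i then 1 else 0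
  v_nonneg i j := by split_ifs <;> positivity
  B _ := 1
  B_nonneg _ := zero_le_one
  win b j :=
    if ∃ i, 0 < b i j then some (argmaxFavoring (Function.invFun ticket (b 0 j)) (b · j)) else none
  win_max b j i h k := by
    obtain ⟨-, h⟩ := Option.ite_none_right_eq_some.1 h
    obtain rfl := Option.some.inj h
    exact le_argmaxFavoring _ (b · j) k
  win_pos b j h := by simp [h]
  win_zero b j h := by simp [h]

variable (n) in
/-- The equilibrium of `auction n`: bidder `0` draws a uniformly random ticket for item `0`, and
all others bid `1` on item `0`. To fit a single support size, the deterministic bids of the latter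
are repeated `n` times. -/
noncomputable def equilibrium : MixedProfile n n where
  K _ := n
  p _ _ := (n : ℝ)⁻¹
  p_nonneg _ _ := by positivity
  p_sum _ := by simp [NeZero.ne n]
  β i k := Pi.single 0 (if i = 0 then ticket k else 1)
  β_nonneg i k j := by
    have hbid : 0 ≤ if i = 0 then ticket k else 1 := by
      split_ifs
      exacts [ticket_nonneg k, zero_le_one]
    exact Pi.single_nonneg (α := fun _ ↦ ℝ).2 hbid j

variable {i : Fin n} (ω : ∀ i, Fin ((equilibrium n).K i))

theorem win_eq_some_of_ticket {b : Fin n → Fin n → ℝ} {j : Fin n} (hpos : 0 < b i j)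
    (hmax : ∀ k, b k j ≤ b i j) (hticket : b 0 j = ticket i) : (auction n).win b j = some i := by
  have hread : Function.invFun ticket (b 0 j) = i := by
    rw [hticket, Function.leftInverse_invFun ticket_injective]
  simp only [auction, hread, argmaxFavoring_eq hmax, if_pos (⟨i, hpos⟩ : ∃ i, 0 < b i j)]

/-- The bidder named by the ticket that bidder `0` draws at the sample point `ω`. -/
def named : Fin n := ω 0

theorem bids_zero : (equilibrium n).bids ω 0 = Pi.single 0 (ticket (named ω)) := by
  simp [MixedProfile.bids, equilibrium, named]

theorem bids_of_ne_zero (hi : i ≠ 0) : (equilibrium n).bids ω i = Pi.single 0 1 := by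
  simp [MixedProfile.bids, equilibrium, hi]

theorem bids_nonneg (i j : Fin n) : 0 ≤ (equilibrium n).bids ω i j :=
  (equilibrium n).β_nonneg i (ω i) j

theorem bids_le_one (i : Fin n) : (equilibrium n).bids ω i 0 ≤ 1 := by
  obtain rfl | hi := eq_or_ne i 0
  · simpa [bids_zero] using (ticket_lt_one (named ω)).le
  · simp [bids_of_ne_zero ω hi]

theorem sum_bids_le_one (i : Fin n) : ∑ j, (equilibrium n).bids ω i j ≤ 1 := by
  rw [Fintype.sum_eq_single 0 fun j hj ↦ by simp [MixedProfile.bids, equilibrium, hj]]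
  exact bids_le_one ω i

theorem win_bids_of_ne_zero (j : Fin n) (hj : j ≠ 0) :
    (auction n).win ((equilibrium n).bids ω) j = none :=
  (auction n).win_zero _ _ fun i ↦ by simp [MixedProfile.bids, equilibrium, hj]

theorem util_zero_nonpos {b : Fin n → Fin n → ℝ} (hb : ∀ j, 0 ≤ b 0 j) :
    (auction n).util 0 b ≤ 0 := by
  simpa [auction] using (auction n).util_le_sum (s := univ) hb (by simp)

theorem util_le_one_of_outbid {b : Fin n → Fin n → ℝ} {k : Fin n} (hi : i ≠ 0)
    (hb : ∀ j, 0 ≤ b i j) (hlt : b i 0 < b k 0) : (auction n).util i b ≤ 1 :=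
  calc (auction n).util i b ≤ ∑ j ∈ univ.erase 0, (auction n).v i j :=
        (auction n).util_le_sum hb fun j hj ↦ by
          obtain rfl : j = 0 := by simpa using hj
          exact (auction n).win_ne_some_of_lt hlt
    _ = ∑ j ∈ univ.erase 0, if j = i then 1 else 0 :=
        sum_congr rfl fun j hj ↦ by simp [auction, hi, ne_of_mem_erase hj]
    _ = 1 := by simp [hi]

theorem win_bids_ne_some_zero (hn : 1 < n) :
    (auction n).win ((equilibrium n).bids ω) 0 ≠ some 0 := by
  have : Nontrivial (Fin n) := Fin.nontrivial_iff_two_le.2 hn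
  obtain ⟨k, hk⟩ := exists_ne (0 : Fin n)
  refine (auction n).win_ne_some_of_lt (k := k) ?_
  simpa [bids_zero, bids_of_ne_zero ω hk] using ticket_lt_one (named ω)

theorem exists_win_bids_eq_some (hn : 1 < n) :
    ∃ w ≠ 0, (auction n).win ((equilibrium n).bids ω) 0 = some w := by
  have : Nontrivial (Fin n) := Fin.nontrivial_iff_two_le.2 hn
  obtain ⟨k, hk⟩ := exists_ne (0 : Fin n)
  obtain ⟨w, hw⟩ := Option.isSome_iff_exists.1 <|
    (auction n).win_pos ((equilibrium n).bids ω) 0 ⟨k, by simp [bids_of_ne_zero ω hk]⟩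
  exact ⟨w, fun h ↦ win_bids_ne_some_zero ω hn (h ▸ hw), hw⟩

theorem util_bids (hn : 1 < n) (i : Fin n) :
    (auction n).util i ((equilibrium n).bids ω) =
      if (auction n).win ((equilibrium n).bids ω) 0 = some i then (n : ℝ) else 0 := by
  rw [(auction n).util_eq_of_unsold (win_bids_of_ne_zero ω)]
  refine if_ctx_congr Iff.rfl (fun hwin ↦ ?_) fun _ ↦ rfl
  have hi : i ≠ 0 := fun h ↦ win_bids_ne_some_zero ω hn (h ▸ hwin)
  simp [auction, hi, bids_of_ne_zero ω hi]

theorem win_bids_of_ticket (hi : i ≠ 0) (hω : named ω = i) :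
    (auction n).win ((equilibrium n).bids ω) 0 = some i := by
  have hbid : (equilibrium n).bids ω i 0 = 1 := by simp [bids_of_ne_zero ω hi]
  refine win_eq_some_of_ticket ?_ ?_ ?_
  · exact hbid ▸ one_pos
  · exact fun k ↦ hbid ▸ bids_le_one ω k
  · simp [bids_zero, hω]

theorem one_le_sum_prob_mul_util (hn : 1 < n) (hi : i ≠ 0) :
    1 ≤ ∑ ω, (equilibrium n).prob ω * (auction n).util i ((equilibrium n).bids ω) :=
  calc (1 : ℝ) = ∑ k : Fin n, (n : ℝ)⁻¹ * if k = i then (n : ℝ) else 0 := by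
        simp [NeZero.ne n]
    _ = ∑ ω, (equilibrium n).prob ω * if named ω = i then (n : ℝ) else 0 :=
        ((equilibrium n).sum_prob_mul_apply 0 fun k : Fin n ↦ if k = i then (n : ℝ) else 0).symm
    _ ≤ ∑ ω, (equilibrium n).prob ω * (auction n).util i ((equilibrium n).bids ω) := by
        refine (equilibrium n).sum_prob_mul_mono fun ω ↦ ?_
        rw [util_bids ω hn]
        split_ifs with hω hwin hwin
        · exact le_rfl
        · exact absurd (win_bids_of_ticket ω hi hω) hwin
        · positivity
        · exact le_rfl

theorem util_update_le_one (hn : 2 < n) (hi : i ≠ 0) {b' : Fin n → ℝ} (hb' : ∀ j, 0 ≤ b' j)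
    (hlt : b' 0 < 1) :
    (auction n).util i (Function.update ((equilibrium n).bids ω) i b') ≤ 1 := by
  obtain ⟨k, hk, hki⟩ := Fin.exists_ne_and_ne_of_two_lt 0 i hn
  refine util_le_one_of_outbid (k := k) hi (by simpa using hb') ?_
  simpa [hki, bids_of_ne_zero ω hk] using hlt

theorem isMixedNash (hn : 2 < n) : IsMixedNash (auction n) (equilibrium n) := by
  refine ⟨fun i ω _ ↦ ?_, fun i b' hb' hsum ↦ ?_⟩
  · exact ((auction n).pay_le_sum (bids_nonneg ω i)).trans (sum_bids_le_one ω i)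
  obtain rfl | hi := eq_or_ne i 0
  · refine (equilibrium n).sum_prob_mul_mono fun ω ↦ ?_
    rw [util_bids ω (by lia), if_neg (win_bids_ne_some_zero ω (by lia))]
    exact util_zero_nonpos (by simpa using hb')
  obtain hlt | hge := lt_or_ge (b' 0) 1
  · calc ∑ ω, (equilibrium n).prob ω *
          (auction n).util i (Function.update ((equilibrium n).bids ω) i b')
        ≤ ∑ ω, (equilibrium n).prob ω * 1 :=
          (equilibrium n).sum_prob_mul_mono fun ω ↦ util_update_le_one ω hn hi hb' hlt
      _ = 1 := (equilibrium n).sum_prob_mul_const 1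
      _ ≤ _ := one_le_sum_prob_mul_util (by lia) hi
  · have hb'_eq : b' = Pi.single 0 1 := eq_single_of_sum_le hb' hsum hge
    have hupdate (ω) : Function.update ((equilibrium n).bids ω) i b' = (equilibrium n).bids ω := by
      rw [hb'_eq, ← bids_of_ne_zero ω hi, Function.update_eq_self]
    simp only [hupdate, ge_iff_le, le_refl]

theorem LW_eq_one (hn : 1 < n) : LW (auction n) (equilibrium n) = 1 := by
  refine LW_eq_of_forall fun ω ↦ ?_
  obtain ⟨w, hw, hwin⟩ := exists_win_bids_eq_some ω hn
  simp only [(auction n).val_eq_of_unsold (win_bids_of_ne_zero ω), hwin, Option.some.injEq]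
  rw [Fintype.sum_eq_single w fun i hi ↦ by simp [hi.symm, auction]]
  simp [auction, hw]

theorem sum_min_value_diagonal :
    ∑ i, min (∑ j ∈ univ.filter (fun j ↦ j = i), (auction n).v i j) ((auction n).B i) =
      (n : ℝ) - 1 :=
  calc _ = ∑ i : Fin n, if i ≠ 0 then (1 : ℝ) else 0 :=
        sum_congr rfl fun i _ ↦ by
          obtain rfl | hi := eq_or_ne i 0 <;> simp [auction, filter_eq', *]
    _ = (n : ℝ) - 1 := by
        rw [sum_boole, filter_ne', card_erase_of_mem (mem_univ _), card_univ, Fintype.card_fin,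
          Nat.cast_pred (NeZero.pos n)]

end TicketAuction

theorem deterministic_tiebreak_mixed_lpoa_linear_general (n : ℕ) (hn : 3 ≤ n) :
    ∃ (A : DetAuction n n) (σ : MixedProfile n n),
      IsMixedNash A σ ∧ 0 < LW A σ ∧
      ∃ alloc : Fin n → Fin n,
        ((n : ℝ) - 1) * LW A σ ≤
          ∑ i, min (∑ j ∈ univ.filter (fun j ↦ alloc j = i), A.v i j) (A.B i) := by
  have : NeZero n := ⟨by lia⟩
  have hLW : LW (TicketAuction.auction n) (TicketAuction.equilibrium n) = 1 :=
    TicketAuction.LW_eq_one (by lia)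
  refine ⟨TicketAuction.auction n, TicketAuction.equilibrium n, TicketAuction.isMixedNash hn,
    hLW ▸ one_pos, id, ?_⟩
  rw [hLW, mul_one]
  exact TicketAuction.sum_min_value_diagonal.ge

/-- **Deterministic tie-breaking, mixed equilibria, `Ω(n)` lower bound**:
for every `n ≥ 5` there are a simultaneous first price auction with `n` bidders
and `n` indivisible items (additive valuations, budgets, deterministic
tie-breaking) and a mixed Nash equilibrium `σ` such that some allocation has
Liquid Welfare at least `(n/2) · LW(σ)`, i.e. `OPT ≥ (n/2) · LW(σ)`. -/
theorem deterministic_tiebreak_mixed_lpoa_linear (n : ℕ) (hn : 5 ≤ n) :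
    ∃ (A : DetAuction n n) (σ : MixedProfile n n),
      IsMixedNash A σ ∧
      ∃ alloc : Fin n → Fin n,
        ((n : ℝ) / 2) * LW A σ ≤
          ∑ i, min (∑ j ∈ univ.filter (fun j => alloc j = i), A.v i j) (A.B i) := by
  obtain ⟨A, σ, hσ, hpos, alloc, h⟩ := deterministic_tiebreak_mixed_lpoa_linear_general n (by lia)
  have hn' : (5 : ℝ) ≤ n := by exact_mod_cast hn
  exact ⟨A, σ, hσ, alloc, (mul_le_mul_of_nonneg_right (by linarith) hpos.le).trans h⟩
end

section
/- For all integers n ≥ 2 and 1 ≤ h ≤ n there exist a share-model simultaneous first price auction with n additive budgeted bidders in which every item has h identical shares, equipped with a randomized tie-breaking rule, and a pure-strategy Nash equilibrium b (no bidder can increase her expected utility, over the tie-breaking randomness, by any deviation whose bids sum to at most her budget), such that OPT ≥ (n/h) · LW(b); that is, with a randomized tie-breaking rule the Liquid Price of Anarchy over pure strategies is Ω(n/h) when items have h shares. -/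
/-!
With a randomized tie-breaking rule, there are share-model simultaneous first
price auctions (each item divided into `h` identical shares) with a pure
Nash equilibrium `b` such that `OPT ≥ (n/h) · LW(b)`: the Liquid Price of
Anarchy over pure strategies is `Ω(n/h)`.
-/

open Finset

/-- A (possibly randomized) allocation rule for a share-model simultaneous first
price auction with goods `Fin m × Fin h` (share `ℓ` of item `j` is `(j, ℓ)`):
`q c` is a finitely supported probability distribution over partial allocations.
Any supported allocation awards each share with a positive bid to a bidder with
the highest bid on it and leaves shares with all-zero bids unallocated. -/
structure RandShareRule (n m h : ℕ) where
  q : (Fin n → Fin m × Fin h → ℝ) → (Fin m × Fin h → Option (Fin n)) → ℝ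
  q_nonneg : ∀ c a, 0 ≤ q c a
  q_sum : ∀ c, ∑ a : Fin m × Fin h → Option (Fin n), q c a = 1
  supp_max : ∀ c a, q c a ≠ 0 → ∀ (g : Fin m × Fin h) (i : Fin n), a g = some i →
    ∀ k, c k g ≤ c i g
  supp_pos : ∀ c a, q c a ≠ 0 → ∀ g : Fin m × Fin h, (∃ i, 0 < c i g) → (a g).isSome
  supp_zero : ∀ c a, q c a ≠ 0 → ∀ g : Fin m × Fin h, (∀ i, c i g = 0) → a g = none

/-- Expected (first price) utility of bidder `i` with additive item values
`v i j` (a share of item `j` is worth `v i j / h`) under bid profile `c`,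
over the tie-breaking randomness. -/
noncomputable def EU {n m h : ℕ} (R : RandShareRule n m h) (v : Fin n → Fin m → ℝ)
    (i : Fin n) (c : Fin n → Fin m × Fin h → ℝ) : ℝ :=
  ∑ a : Fin m × Fin h → Option (Fin n), R.q c a *
    ∑ g : Fin m × Fin h, if a g = some i then v i g.1 / h - c i g else 0

/-- Expected Liquid Welfare of bid profile `c` over the tie-breaking randomness. -/
noncomputable def LWs {n m h : ℕ} (R : RandShareRule n m h) (v : Fin n → Fin m → ℝ)
    (B : Fin n → ℝ) (c : Fin n → Fin m × Fin h → ℝ) : ℝ :=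
  ∑ i : Fin n, ∑ a : Fin m × Fin h → Option (Fin n),
    R.q c a * min (∑ g : Fin m × Fin h, if a g = some i then v i g.1 / h else 0) (B i)

/-!
All bidders compete for the shares of item `0`, and item `i ≠ 0` is a private item of bidder `i`,
unless she is a guard. Ties are broken by drawing one bidder uniformly and giving her priority on
every share on which her bid is maximal. Ordinary bidders have budget `1` and value item `0` so
highly that the `1 / n` chance of one share of it at price `1` is worth at least as much as their
whole private item, which is free at equilibrium. They therefore spend their budget on share `0` of
item `0`, and their private items stay unsold. When `h ≥ 2`, two guards, bidders `0` and `1`, bid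
`1` on every share of item `0`, exactly what a share is worth to them: each makes the other pay the
full price, neither gains anything by deviating, and no other share is cheaper than share `0`. At
most `h` shares are sold, each contributing at most `1` to the Liquid Welfare. Giving item `i` to
bidder `i` instead yields `1` per ordinary bidder and, when there are guards, `h ≥ 2` from bidder
`0`.
-/

namespace ShareLPoA

open scoped BigOperators

lemma eq_single_of_sum_le {ι M : Type*} [Fintype ι] [DecidableEq ι] [AddCommGroup M]
    [PartialOrder M] [IsOrderedAddMonoid M] {d : ι → M} {x : M} {i : ι} (hd : ∀ j, 0 ≤ d j)
    (hsum : ∑ j, d j ≤ x) (hi : x ≤ d i) : d = Pi.single i x := by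
  have hsplit : d i + ∑ j ∈ univ.erase i, d j ≤ x :=
    (add_sum_erase univ d (mem_univ i)).trans_le hsum
  have hrest : 0 ≤ ∑ j ∈ univ.erase i, d j := sum_nonneg fun j _ => hd j
  have hdi : d i = x := le_antisymm ((le_add_of_nonneg_right hrest).trans hsplit) hi
  have hrest_zero : ∑ j ∈ univ.erase i, d j = 0 :=
    le_antisymm (by simpa [hdi] using hsplit) hrest
  funext j
  obtain rfl | hne := eq_or_ne j i
  · rw [Pi.single_eq_same, hdi]
  · rw [Pi.single_eq_of_ne hne]
    exact (sum_eq_zero_iff_of_nonneg fun j _ => hd j).1 hrest_zero j (by simp [hne])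

section Allocations

variable {n : ℕ} {γ : Type*}

/-- The deterministic allocation `a` is a possible first price outcome of the bids `c`: goods go to
highest bidders, and a good is left unallocated only if nobody bids on it. This is the condition
that `RandShareRule` imposes on supported allocations, for an arbitrary type `γ` of goods. -/
structure IsFirstPriceAlloc (c : Fin n → γ → ℝ) (a : γ → Option (Fin n)) : Prop where
  le_winner : ∀ g i, a g = some i → ∀ k, c k g ≤ c i g
  isSome_of_pos : ∀ g, (∃ i, 0 < c i g) → (a g).isSome
  eq_none_of_zero : ∀ g, (∀ i, c i g = 0) → a g = none

lemma IsFirstPriceAlloc.winner_pos {c : Fin n → γ → ℝ} {a : γ → Option (Fin n)}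
    (ha : IsFirstPriceAlloc c a) (hc : ∀ i g, 0 ≤ c i g) {g : γ} {i : Fin n}
    (hg : a g = some i) : 0 < c i g := by
  obtain ⟨k, hk⟩ : ∃ k, c k g ≠ 0 := by
    by_contra! hzero
    simp [ha.eq_none_of_zero g hzero] at hg
  exact ((hc k g).lt_of_ne' hk).trans_le (ha.le_winner g i hg k)

/-- The bidders whose bid on the good `g` is maximal. -/
noncomputable def topBidders (c : Fin n → γ → ℝ) (g : γ) : Finset (Fin n) :=
  {i | ∀ k, c k g ≤ c i g}

@[simp]
lemma mem_topBidders {c : Fin n → γ → ℝ} {g : γ} {i : Fin n} :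
    i ∈ topBidders c g ↔ ∀ k, c k g ≤ c i g := by
  simp [topBidders]

lemma topBidders_nonempty [NeZero n] (c : Fin n → γ → ℝ) (g : γ) : (topBidders c g).Nonempty :=
  (Finite.exists_max (c · g)).imp fun _ => mem_topBidders.2

variable [NeZero n]

/-- The winner of the good `g` when ties are broken in favour of bidder `k`, and in favour of the
lowest index where `k` is not among the highest bidders. -/
noncomputable def priorityWinner (c : Fin n → γ → ℝ) (k : Fin n) (g : γ) : Fin n :=
  if k ∈ topBidders c g then k else (topBidders c g).min' (topBidders_nonempty c g)

lemma priorityWinner_of_mem {c : Fin n → γ → ℝ} {k : Fin n} {g : γ} (hk : k ∈ topBidders c g) :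
    priorityWinner c k g = k :=
  if_pos hk

lemma priorityWinner_mem_topBidders (c : Fin n → γ → ℝ) (k : Fin n) (g : γ) :
    priorityWinner c k g ∈ topBidders c g := by
  unfold priorityWinner
  split_ifs with hk
  exacts [hk, min'_mem _ _]

lemma priorityWinner_le_of_notMem {c : Fin n → γ → ℝ} {k l : Fin n} {g : γ}
    (hk : k ∉ topBidders c g) (hl : l ∈ topBidders c g) : priorityWinner c k g ≤ l := by
  rw [priorityWinner, if_neg hk]
  exact min'_le _ _ hl

/-- The allocation that sells every good on which there is a nonzero bid to its
`priorityWinner`. -/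
noncomputable def priorityAlloc (c : Fin n → γ → ℝ) (k : Fin n) (g : γ) : Option (Fin n) :=
  if ∀ i, c i g = 0 then none else some (priorityWinner c k g)

lemma priorityWinner_eq_of_priorityAlloc_eq_some {c : Fin n → γ → ℝ} {k i : Fin n} {g : γ}
    (hg : priorityAlloc c k g = some i) : priorityWinner c k g = i := by
  unfold priorityAlloc at hg
  split_ifs at hg
  exact Option.some.inj hg

lemma isFirstPriceAlloc_priorityAlloc (c : Fin n → γ → ℝ) (k : Fin n) :
    IsFirstPriceAlloc c (priorityAlloc c k) where
  le_winner g i hg := by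
    rw [← priorityWinner_eq_of_priorityAlloc_eq_some hg, ← mem_topBidders]
    exact priorityWinner_mem_topBidders c k g
  isSome_of_pos g := by
    rintro ⟨i, hi⟩
    simp [priorityAlloc, show ¬ ∀ j, c j g = 0 from fun hzero => hi.ne' (hzero i)]
  eq_none_of_zero _ hzero := if_pos hzero

lemma priorityAlloc_self {c : Fin n → γ → ℝ} {k : Fin n} {g : γ} (hk : k ∈ topBidders c g)
    (hkg : c k g ≠ 0) : priorityAlloc c k g = some k := by
  rw [priorityAlloc, if_neg fun hzero => hkg (hzero k), priorityWinner_of_mem hk]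

end Allocations

section Bundles

variable {n : ℕ} {γ : Type*} [Fintype γ]

/-- The set of goods that the allocation `a` awards to bidder `i`. -/
def bundle (a : γ → Option (Fin n)) (i : Fin n) : Finset γ :=
  {g | a g = some i}

@[simp]
lemma mem_bundle {a : γ → Option (Fin n)} {i : Fin n} {g : γ} :
    g ∈ bundle a i ↔ a g = some i := by
  simp [bundle]

lemma sum_card_bundle_le {a : γ → Option (Fin n)} {s : Finset γ}
    (hs : ∀ i, bundle a i ⊆ s) : ∑ i, #(bundle a i) ≤ #s := by
  classical
  rw [← card_biUnion]
  · exact card_le_card (biUnion_subset.2 fun i _ => hs i)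
  · intro i _ j _ hij
    refine Finset.disjoint_left.2 fun g hi hj => hij ?_
    rw [mem_bundle] at hi hj
    exact Option.some.inj (hi.symm.trans hj)

end Bundles

section Rules

variable {n m h : ℕ}

/-- Expectation of `F a` over the random allocation `a` that the rule `R` selects under the bid
profile `c`. -/
def expectation (R : RandShareRule n m h) (c : Fin n → Fin m × Fin h → ℝ)
    (F : (Fin m × Fin h → Option (Fin n)) → ℝ) : ℝ :=
  ∑ a, R.q c a * F a

lemma isFirstPriceAlloc_of_q_ne_zero (R : RandShareRule n m h) {c : Fin n → Fin m × Fin h → ℝ}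
    {a : Fin m × Fin h → Option (Fin n)} (ha : R.q c a ≠ 0) : IsFirstPriceAlloc c a :=
  ⟨R.supp_max c a ha, R.supp_pos c a ha, R.supp_zero c a ha⟩

lemma expectation_mono (R : RandShareRule n m h) {c : Fin n → Fin m × Fin h → ℝ}
    {F F' : (Fin m × Fin h → Option (Fin n)) → ℝ}
    (hF : ∀ a, IsFirstPriceAlloc c a → F a ≤ F' a) : expectation R c F ≤ expectation R c F' := by
  refine sum_le_sum fun a _ => ?_
  obtain ha | ha := eq_or_ne (R.q c a) 0
  · simp [ha]
  · exact mul_le_mul_of_nonneg_left (hF a (isFirstPriceAlloc_of_q_ne_zero R ha)) (R.q_nonneg c a)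

lemma expectation_const (R : RandShareRule n m h) (c : Fin n → Fin m × Fin h → ℝ) (x : ℝ) :
    expectation R c (fun _ => x) = x := by
  rw [expectation, ← sum_mul, R.q_sum, one_mul]

lemma expectation_le (R : RandShareRule n m h) {c : Fin n → Fin m × Fin h → ℝ}
    {F : (Fin m × Fin h → Option (Fin n)) → ℝ} {x : ℝ}
    (hF : ∀ a, IsFirstPriceAlloc c a → F a ≤ x) : expectation R c F ≤ x :=
  (expectation_mono R hF).trans_eq (expectation_const R c x)

lemma le_expectation (R : RandShareRule n m h) {c : Fin n → Fin m × Fin h → ℝ}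
    {F : (Fin m × Fin h → Option (Fin n)) → ℝ} {x : ℝ}
    (hF : ∀ a, IsFirstPriceAlloc c a → x ≤ F a) : x ≤ expectation R c F :=
  (expectation_const R c x).symm.trans_le (expectation_mono R hF)

/-- Utility of a bidder with item values `w` who wins the set `s` of shares and pays her bids
`p` on them. -/
noncomputable def surplus (w : Fin m → ℝ) (p : Fin m × Fin h → ℝ)
    (s : Finset (Fin m × Fin h)) : ℝ :=
  ∑ g ∈ s, (w g.1 / h - p g)

/-- Liquid Welfare of the deterministic allocation `a`. -/
noncomputable def liquidWelfare (v : Fin n → Fin m → ℝ) (B : Fin n → ℝ)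
    (a : Fin m × Fin h → Option (Fin n)) : ℝ :=
  ∑ i, min (∑ g ∈ bundle a i, v i g.1 / h) (B i)

lemma EU_eq_expectation (R : RandShareRule n m h) (v : Fin n → Fin m → ℝ) (i : Fin n)
    (c : Fin n → Fin m × Fin h → ℝ) :
    EU R v i c = expectation R c fun a => surplus (v i) (c i) (bundle a i) := by
  simp only [EU, expectation, surplus, bundle, sum_filter]

lemma LWs_eq_expectation (R : RandShareRule n m h) (v : Fin n → Fin m → ℝ) (B : Fin n → ℝ)
    (c : Fin n → Fin m × Fin h → ℝ) :
    LWs R v B c = expectation R c (liquidWelfare v B) := by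
  simp only [LWs, expectation, liquidWelfare, bundle, sum_filter, mul_sum]
  exact sum_comm

/-- The rule that draws `k` uniformly and selects the allocation `A c k`. -/
noncomputable def uniformRule {κ : Type*} [Fintype κ] [Nonempty κ]
    (A : (Fin n → Fin m × Fin h → ℝ) → κ → Fin m × Fin h → Option (Fin n))
    (hA : ∀ c k, IsFirstPriceAlloc c (A c k)) : RandShareRule n m h :=
  have isFirstPriceAlloc_of_ne_zero {c a} (ha : 𝔼 k, (if A c k = a then (1 : ℝ) else 0) ≠ 0) :
      IsFirstPriceAlloc c a := by
    obtain ⟨k, -, hk⟩ := exists_ne_zero_of_expect_ne_zero ha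
    rw [← (ite_ne_right_iff.1 hk).1]
    exact hA c k
  { q := fun c a => 𝔼 k, if A c k = a then 1 else 0
    q_nonneg := fun c a => expect_nonneg fun k _ => by split_ifs <;> positivity
    q_sum := fun c => by simp [← expect_sum_comm]
    supp_max := fun _ _ ha => (isFirstPriceAlloc_of_ne_zero ha).le_winner
    supp_pos := fun _ _ ha => (isFirstPriceAlloc_of_ne_zero ha).isSome_of_pos
    supp_zero := fun _ _ ha => (isFirstPriceAlloc_of_ne_zero ha).eq_none_of_zero }

lemma expectation_uniformRule {κ : Type*} [Fintype κ] [Nonempty κ]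
    (A : (Fin n → Fin m × Fin h → ℝ) → κ → Fin m × Fin h → Option (Fin n))
    (hA : ∀ c k, IsFirstPriceAlloc c (A c k)) (c : Fin n → Fin m × Fin h → ℝ)
    (F : (Fin m × Fin h → Option (Fin n)) → ℝ) :
    expectation (uniformRule A hA) c F = 𝔼 k, F (A c k) := by
  simp only [expectation, uniformRule, expect_mul, ← expect_sum_comm]
  simp

/-- The tie-breaking rule that gives priority to a uniformly random bidder. -/
noncomputable def priorityRule (n m h : ℕ) [NeZero n] : RandShareRule n m h :=
  uniformRule priorityAlloc isFirstPriceAlloc_priorityAlloc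

lemma sum_shares [NeZero h] (w : Fin m → ℝ) (j : Fin m) :
    ∑ g : Fin m × Fin h with g.1 = j, w g.1 / h = w j := by
  have hh : (h : ℝ) ≠ 0 := NeZero.ne _
  rw [sum_filter, Fintype.sum_prod_type]
  simp [sum_ite_irrel, mul_div_cancel₀ _ hh]

end Rules

section Instance

variable {n h : ℕ}

/-- The guards, who keep the price of every share of item `0` at `1`: bidders `0` and `1` if there
are several shares. A single share needs no guards, as all bidders compete for it anyway. -/
def guards (n h : ℕ) : Finset (Fin (n + 2)) :=
  {i | 1 < h ∧ (i : ℕ) < 2}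

lemma mem_guards {i : Fin (n + 2)} : i ∈ guards n h ↔ 1 < h ∧ (i : ℕ) < 2 := by
  simp [guards]

/-- Item values: one share of item `0` is worth `1` to a guard and one more than the number of
bidders to the others, who value their private item at `1`. -/
noncomputable def value (h : ℕ) (i j : Fin (n + 2)) : ℝ :=
  if j = 0 then if i ∈ guards n h then h else h * (n + 3)
  else if j = i ∧ i ∉ guards n h then 1 else 0

/-- Budgets, exhausted by the equilibrium bids `bid`. -/
noncomputable def budget (h : ℕ) (i : Fin (n + 2)) : ℝ :=
  if i ∈ guards n h then h else 1

/-- The equilibrium: guards bid `1` on every share of item `0`, the others only on its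
share `0`. -/
noncomputable def bid [NeZero h] (i : Fin (n + 2)) (g : Fin (n + 2) × Fin h) : ℝ :=
  if g.1 = 0 ∧ (i ∈ guards n h ∨ g.2 = 0) then 1 else 0

lemma value_nonneg (i j : Fin (n + 2)) : 0 ≤ value h i j := by
  unfold value
  split_ifs <;> positivity

lemma value_le_ite {i j : Fin (n + 2)} (hj : j ≠ 0) : value h i j ≤ if j = i then 1 else 0 := by
  unfold value
  grind

lemma value_guard_of_ne_zero {i j : Fin (n + 2)} (hi : i ∈ guards n h) (hj : j ≠ 0) :
    value h i j = 0 := by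
  simp only [value, hj, hi, not_true_eq_false, and_false, if_false]

variable [NeZero h]

lemma one_le_budget (i : Fin (n + 2)) : 1 ≤ budget h i := by
  unfold budget
  split_ifs
  exacts [Nat.one_le_cast.2 NeZero.one_le, le_rfl]

lemma share_value_guard {i : Fin (n + 2)} (hi : i ∈ guards n h) : value h i 0 / h = 1 := by
  rw [value, if_pos rfl, if_pos hi, div_self (NeZero.ne _)]

lemma share_value_ordinary {i : Fin (n + 2)} (hi : i ∉ guards n h) :
    value h i 0 / h = n + 3 := by
  rw [value, if_pos rfl, if_neg hi, mul_div_cancel_left₀ _ (NeZero.ne _)]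

lemma one_le_share_value (i : Fin (n + 2)) : 1 ≤ value h i 0 / h := by
  by_cases hi : i ∈ guards n h
  · rw [share_value_guard hi]
  · rw [share_value_ordinary hi]
    linarith [n.cast_nonneg (α := ℝ)]

lemma bid_nonneg (i : Fin (n + 2)) (g : Fin (n + 2) × Fin h) : 0 ≤ bid i g := by
  unfold bid
  split_ifs <;> positivity

lemma bid_le_one (i : Fin (n + 2)) (g : Fin (n + 2) × Fin h) : bid i g ≤ 1 := by
  unfold bid
  split_ifs <;> norm_num

lemma bid_share_zero (i : Fin (n + 2)) : bid i ((0, 0) : Fin (n + 2) × Fin h) = 1 := by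
  simp [bid]

lemma bid_of_ne_zero (i : Fin (n + 2)) {g : Fin (n + 2) × Fin h} (hg : g.1 ≠ 0) :
    bid i g = 0 := by
  simp [bid, hg]

lemma sum_bid_le_budget (i : Fin (n + 2)) :
    ∑ g : Fin (n + 2) × Fin h, bid i g ≤ budget h i := by
  rw [Fintype.sum_prod_type]
  by_cases hi : i ∈ guards n h
  · simp [bid, budget, hi]
  · simp [bid, budget, hi, ite_and]

lemma bid_eq_one_of_lt_two {i : Fin (n + 2)} (hi : (i : ℕ) < 2) (l : Fin h) :
    bid i (0, l) = 1 := by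
  refine if_pos ⟨rfl, ?_⟩
  obtain hh | hh := (NeZero.one_le (n := h)).lt_or_eq
  · exact .inl (mem_guards.2 ⟨hh, hi⟩)
  · subst hh
    exact .inr (Subsingleton.elim l 0)

lemma exists_rival (i : Fin (n + 2)) (l : Fin h) : ∃ j ≠ i, bid j (0, l) = 1 := by
  obtain rfl | hi := eq_or_ne i 0
  · exact ⟨1, one_ne_zero, bid_eq_one_of_lt_two (by simp) l⟩
  · exact ⟨0, hi.symm, bid_eq_one_of_lt_two (by simp) l⟩

section LiquidWelfare

variable {a : Fin (n + 2) × Fin h → Option (Fin (n + 2))}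

lemma fst_eq_zero_of_sold (ha : IsFirstPriceAlloc bid a) {g : Fin (n + 2) × Fin h}
    {i : Fin (n + 2)} (hg : a g = some i) : g.1 = 0 := by
  by_contra hne
  exact (ha.winner_pos bid_nonneg hg).ne' (bid_of_ne_zero i hne)

lemma liquid_value_le_card_bundle (ha : IsFirstPriceAlloc bid a) (i : Fin (n + 2)) :
    min (∑ g ∈ bundle a i, value h i g.1 / h) (budget h i) ≤ #(bundle a i) := by
  by_cases hi : i ∈ guards n h
  · refine (min_le_left _ _).trans_eq ?_
    have hvalue : ∀ g ∈ bundle a i, value h i g.1 / h = 1 := fun g hg => by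
      rw [fst_eq_zero_of_sold ha (mem_bundle.1 hg), share_value_guard hi]
    rw [sum_congr rfl hvalue, sum_const, nsmul_one]
  obtain hempty | hne := (bundle a i).eq_empty_or_nonempty
  · simp [hempty]
  · refine (min_le_right _ _).trans ?_
    rw [budget, if_neg hi]
    exact_mod_cast hne.card_pos

lemma liquidWelfare_le (ha : IsFirstPriceAlloc bid a) :
    liquidWelfare (value h) (budget h) a ≤ h := by
  have hsold : ∑ i, #(bundle a i) ≤ h :=
    (sum_card_bundle_le (s := {0} ×ˢ univ) fun i g hg =>
      mem_product.2 ⟨mem_singleton.2 (fst_eq_zero_of_sold ha (mem_bundle.1 hg)),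
        mem_univ _⟩).trans_eq (by simp)
  calc liquidWelfare (value h) (budget h) a
      ≤ ∑ i, (#(bundle a i) : ℝ) := sum_le_sum fun i _ => liquid_value_le_card_bundle ha i
    _ ≤ h := by exact_mod_cast hsold

lemma one_le_liquidWelfare (ha : IsFirstPriceAlloc bid a) :
    1 ≤ liquidWelfare (value h) (budget h) a := by
  obtain ⟨i, hi⟩ : ∃ i, a (0, 0) = some i :=
    Option.isSome_iff_exists.1 (ha.isSome_of_pos _ ⟨0, by simp [bid_share_zero]⟩)
  have hshare (i : Fin (n + 2)) (g : Fin (n + 2) × Fin h) : 0 ≤ value h i g.1 / h :=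
    div_nonneg (value_nonneg i _) h.cast_nonneg
  have hvalue : 1 ≤ ∑ g ∈ bundle a i, value h i g.1 / h :=
    (one_le_share_value i).trans
      (single_le_sum (fun g _ => hshare i g) (mem_bundle.2 hi))
  exact (le_min hvalue (one_le_budget i)).trans <|
    single_le_sum (f := fun i => min (∑ g ∈ bundle a i, value h i g.1 / h) (budget h i))
      (fun i _ => le_min (sum_nonneg fun g _ => hshare i g)
        (zero_le_one.trans (one_le_budget i))) (mem_univ i)

end LiquidWelfare

section OwnItems

lemma one_le_min_value_budget {i : Fin (n + 2)} (hi : i ∉ guards n h) :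
    1 ≤ min (value h i i) (budget h i) := by
  refine le_min ?_ (one_le_budget i)
  obtain rfl | hne := eq_or_ne i 0
  · exact (one_le_share_value 0).trans
      (div_le_self (value_nonneg 0 0) (Nat.one_le_cast.2 NeZero.one_le))
  · simp only [value, hne, hi, if_false, not_false_eq_true, and_self, if_true, le_refl]

variable (n h) in
lemma two_le_min_value_budget_add :
    2 ≤ min (value h (0 : Fin (n + 2)) 0) (budget h (0 : Fin (n + 2))) +
      min (value h (1 : Fin (n + 2)) 1) (budget h (1 : Fin (n + 2))) := by
  by_cases hh : 1 < h
  · have hguard : (0 : Fin (n + 2)) ∈ guards n h := by simp [mem_guards, hh]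
    have hzero : min (value h (0 : Fin (n + 2)) 0) (budget h (0 : Fin (n + 2))) = h := by
      rw [value, if_pos rfl, budget, if_pos hguard, if_pos hguard, min_self]
    have hone : 0 ≤ min (value h (1 : Fin (n + 2)) 1) (budget h (1 : Fin (n + 2))) :=
      le_min (value_nonneg 1 1) (zero_le_one.trans (one_le_budget 1))
    have hcast : (2 : ℝ) ≤ h := by exact_mod_cast hh
    linarith
  · have hordinary (i : Fin (n + 2)) : i ∉ guards n h := by simp [mem_guards, hh]
    linarith [one_le_min_value_budget (hordinary 0), one_le_min_value_budget (hordinary 1)]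

variable (n h) in
lemma le_sum_min_value_budget :
    (n : ℝ) + 2 ≤ ∑ i : Fin (n + 2), min (value h i i) (budget h i) := by
  have hrest : (n : ℝ) ≤ ∑ i : Fin n, min (value h i.succ.succ i.succ.succ)
      (budget h i.succ.succ) := by
    simpa using card_nsmul_le_sum univ _ (1 : ℝ)
      fun (i : Fin n) _ =>
        one_le_min_value_budget (h := h) (i := i.succ.succ) (by simp [mem_guards])
  rw [Fin.sum_univ_succ, Fin.sum_univ_succ, Fin.succ_zero_eq_one]
  linarith [two_le_min_value_budget_add n h]

end OwnItems

section Equilibrium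

variable {a : Fin (n + 2) × Fin h → Option (Fin (n + 2))} {i : Fin (n + 2)}

lemma bid_le_share_value (i : Fin (n + 2)) (g : Fin (n + 2) × Fin h) :
    bid i g ≤ value h i g.1 / h := by
  obtain hg | hg := eq_or_ne g.1 0
  · rw [hg]
    exact (bid_le_one i g).trans (one_le_share_value i)
  · rw [bid_of_ne_zero i hg]
    exact div_nonneg (value_nonneg i _) h.cast_nonneg

lemma surplus_bid_nonneg (i : Fin (n + 2)) (s : Finset (Fin (n + 2) × Fin h)) :
    0 ≤ surplus (value h i) (bid i) s :=
  sum_nonneg fun g _ => sub_nonneg.2 (bid_le_share_value i g)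

lemma le_surplus_bid_priorityAlloc_self (hi : i ∉ guards n h) :
    (n : ℝ) + 2 ≤ surplus (h := h) (value h i) (bid i) (bundle (priorityAlloc bid i) i) := by
  have hwin : priorityAlloc bid i ((0, 0) : Fin (n + 2) × Fin h) = some i :=
    priorityAlloc_self (by simp [bid_share_zero]) (by simp [bid_share_zero])
  calc (n : ℝ) + 2 = value h i 0 / h - bid i ((0, 0) : Fin (n + 2) × Fin h) := by
        rw [share_value_ordinary hi, bid_share_zero]
        ring
    _ ≤ _ := single_le_sum (f := fun g : Fin (n + 2) × Fin h => value h i g.1 / h - bid i g)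
        (fun g _ => sub_nonneg.2 (bid_le_share_value i g)) (mem_bundle.2 hwin)

lemma expect_ite_bidder_eq (i : Fin (n + 2)) :
    𝔼 k, (if k = i then (n : ℝ) + 2 else 0) = 1 := by
  rw [Fintype.expect_eq_sum_div_card]
  simp only [sum_ite_eq', mem_univ, if_true, Fintype.card_fin]
  push_cast
  exact div_self (by positivity)

lemma one_le_EU_bid_ordinary (hi : i ∉ guards n h) :
    1 ≤ EU (priorityRule (n + 2) (n + 2) h) (value h) i bid := by
  rw [EU_eq_expectation, priorityRule, expectation_uniformRule, ← expect_ite_bidder_eq i]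
  refine expect_le_expect fun k _ => ?_
  split_ifs with hk
  · subst hk
    exact le_surplus_bid_priorityAlloc_self hi
  · exact surplus_bid_nonneg i _

variable {d : Fin (n + 2) × Fin h → ℝ}

lemma one_le_deviation_of_wins (ha : IsFirstPriceAlloc (Function.update bid i d) a) {l : Fin h}
    (hl : a (0, l) = some i) : 1 ≤ d (0, l) := by
  obtain ⟨j, hji, hj⟩ := exists_rival i l
  simpa [Function.update_of_ne hji, hj] using ha.le_winner _ i hl j

lemma surplus_deviation_guard_nonpos (hi : i ∈ guards n h) (hd : ∀ g, 0 ≤ d g)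
    (ha : IsFirstPriceAlloc (Function.update bid i d) a) :
    surplus (value h i) d (bundle a i) ≤ 0 := by
  refine sum_nonpos fun ⟨j, l⟩ hg => ?_
  obtain rfl | hj := eq_or_ne j 0
  · rw [share_value_guard hi]
    linarith [one_le_deviation_of_wins ha (mem_bundle.1 hg)]
  · rw [value_guard_of_ne_zero hi hj, zero_div]
    linarith [hd (j, l)]

lemma surplus_deviation_le_one_of_lt (hd : ∀ g, 0 ≤ d g) (hlow : ∀ l, d (0, l) < 1)
    (ha : IsFirstPriceAlloc (Function.update bid i d) a) :
    surplus (value h i) d (bundle a i) ≤ 1 := by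
  have hprivate : ∀ g ∈ bundle a i, value h i g.1 ≤ if g.1 = i then 1 else 0 := by
    rintro ⟨j, l⟩ hg
    refine value_le_ite fun (hj : j = 0) => ?_
    subst hj
    exact (hlow l).not_ge (one_le_deviation_of_wins ha (mem_bundle.1 hg))
  calc surplus (value h i) d (bundle a i)
      ≤ ∑ g ∈ bundle a i, (if g.1 = i then 1 else 0) / (h : ℝ) :=
        sum_le_sum fun g hg => (sub_le_self _ (hd g)).trans
          (div_le_div_of_nonneg_right (hprivate g hg) h.cast_nonneg)
    _ ≤ ∑ g : Fin (n + 2) × Fin h, (if g.1 = i then 1 else 0) / (h : ℝ) :=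
        sum_le_univ_sum_of_nonneg fun g => by split_ifs <;> positivity
    _ = ∑ g : Fin (n + 2) × Fin h with g.1 = i, 1 / (h : ℝ) := by
        simp only [ite_div, zero_div, sum_filter]
    _ = 1 := sum_shares (fun _ => 1) i

lemma priority_of_wins_single (hi : i ∉ guards n h) {k : Fin (n + 2)} {l : Fin h}
    (hl : priorityAlloc (Function.update bid i (Pi.single (0, l) 1)) k (0, l) = some i) :
    k = i := by
  set c := Function.update bid i (Pi.single ((0, l) : Fin (n + 2) × Fin h) (1 : ℝ)) with hc
  have hle_one (j : Fin (n + 2)) : c j (0, l) ≤ 1 := by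
    obtain rfl | hj := eq_or_ne j i
    · simp [hc]
    · simpa [hc, Function.update_of_ne hj] using bid_le_one j (0, l)
  have htop {j : Fin (n + 2)} (hji : j ≠ i) (hj : bid j (0, l) = 1) :
      j ∈ topBidders c (0, l) :=
    mem_topBidders.2 fun j' => by simpa [hc, Function.update_of_ne hji, hj] using hle_one j'
  have hwinner := priorityWinner_eq_of_priorityAlloc_eq_some hl
  by_contra hki
  have hk : k ∉ topBidders c (0, l) := fun hk =>
    hki ((priorityWinner_of_mem hk).symm.trans hwinner)
  have hh : 1 < h := by
    by_contra hh
    obtain rfl : h = 1 := le_antisymm (not_lt.1 hh) NeZero.one_le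
    exact hk (htop hki (by simp [bid, Subsingleton.elim l 0]))
  have hi0 : i ≠ 0 := by
    rintro rfl
    exact hi (by simp [mem_guards, hh])
  have hle : i ≤ 0 := hwinner ▸
    priorityWinner_le_of_notMem hk (htop hi0.symm (bid_eq_one_of_lt_two (by simp) l))
  exact hi0 (Fin.le_zero_iff.1 hle)

lemma surplus_single_le_ite (hi : i ∉ guards n h) (k : Fin (n + 2)) (l : Fin h) :
    surplus (value h i) (Pi.single (0, l) 1)
      (bundle (priorityAlloc (Function.update bid i (Pi.single (0, l) 1)) k) i) ≤
        if k = i then (n : ℝ) + 2 else 0 := by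
  set d : Fin (n + 2) × Fin h → ℝ := Pi.single (0, l) 1
  set s := bundle (priorityAlloc (Function.update bid i d) k) i
  have hd : 0 ≤ d := Pi.single_nonneg.2 zero_le_one
  have hbids (j : Fin (n + 2)) (g : Fin (n + 2) × Fin h) : 0 ≤ Function.update bid i d j g := by
    obtain rfl | hj := eq_or_ne j i
    · simpa using hd g
    · simpa [Function.update_of_ne hj] using bid_nonneg j g
  have hsub : s ⊆ {(0, l)} := fun g hg => by
    have hpos := (isFirstPriceAlloc_priorityAlloc _ k).winner_pos hbids (mem_bundle.1 hg)
    rw [Function.update_self] at hpos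
    exact mem_singleton.2 (by_contra fun hne => hpos.ne' (Pi.single_eq_of_ne hne 1))
  obtain hempty | hsingle := subset_singleton_iff.1 hsub
  · rw [hempty, surplus, sum_empty]
    positivity
  · have hwin : (0, l) ∈ s := hsingle ▸ mem_singleton_self _
    rw [if_pos (priority_of_wins_single hi (mem_bundle.1 hwin)), hsingle, surplus, sum_singleton,
      share_value_ordinary hi, show d (0, l) = 1 from Pi.single_eq_same _ _]
    linarith

lemma EU_deviation_ordinary_le_one (hi : i ∉ guards n h) (hd : ∀ g, 0 ≤ d g)
    (hbudget : ∑ g, d g ≤ 1) :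
    EU (priorityRule (n + 2) (n + 2) h) (value h) i (Function.update bid i d) ≤ 1 := by
  rw [EU_eq_expectation, Function.update_self]
  by_cases hlow : ∀ l, d (0, l) < 1
  · exact expectation_le _ fun a ha => surplus_deviation_le_one_of_lt hd hlow ha
  · push Not at hlow
    obtain ⟨l, hl⟩ := hlow
    rw [eq_single_of_sum_le hd hbudget hl, priorityRule, expectation_uniformRule]
    exact (expect_le_expect fun k _ => surplus_single_le_ite hi k l).trans_eq
      (expect_ite_bidder_eq i)

lemma EU_update_bid_le (i : Fin (n + 2)) (hd : ∀ g, 0 ≤ d g) (hbudget : ∑ g, d g ≤ budget h i) :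
    EU (priorityRule (n + 2) (n + 2) h) (value h) i (Function.update bid i d) ≤
      EU (priorityRule (n + 2) (n + 2) h) (value h) i bid := by
  by_cases hi : i ∈ guards n h
  · rw [EU_eq_expectation, EU_eq_expectation, Function.update_self]
    exact (expectation_le _ fun a ha => surplus_deviation_guard_nonpos hi hd ha).trans
      (le_expectation _ fun a _ => surplus_bid_nonneg i _)
  · rw [budget, if_neg hi] at hbudget
    exact (EU_deviation_ordinary_le_one hi hd hbudget).trans (one_le_EU_bid_ordinary hi)

end Equilibrium

end Instance

end ShareLPoA

/-- Positivity of `LWs R v B b` is what makes `n / h` a bound on the ratio `OPT / LW(b)`. -/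
theorem randomized_tiebreak_shares_lpoa_general (n h : ℕ) (hn : 2 ≤ n) (hh : 1 ≤ h) :
    ∃ (m : ℕ) (v : Fin n → Fin m → ℝ) (B : Fin n → ℝ)
      (R : RandShareRule n m h) (b : Fin n → Fin m × Fin h → ℝ),
      (∀ i j, 0 ≤ v i j) ∧ (∀ i, 0 ≤ B i) ∧ (∀ i g, 0 ≤ b i g) ∧
      (∀ i, (∑ g : Fin m × Fin h, b i g) ≤ B i) ∧
      (∀ i (c' : Fin m × Fin h → ℝ), (∀ g, 0 ≤ c' g) →
        (∑ g : Fin m × Fin h, c' g) ≤ B i →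
        EU R v i (Function.update b i c') ≤ EU R v i b) ∧
      0 < LWs R v B b ∧
      ∃ alloc : Fin m × Fin h → Fin n,
        ((n : ℝ) / h) * LWs R v B b ≤
          ∑ i, min (∑ g ∈ univ.filter (fun g => alloc g = i), v i g.1 / h) (B i) := by
  open ShareLPoA in
  obtain ⟨n, rfl⟩ := Nat.exists_eq_add_of_le' hn
  have : NeZero h := ⟨by omega⟩
  refine ⟨n + 2, value h, budget h, priorityRule (n + 2) (n + 2) h, bid, value_nonneg,
    fun i => zero_le_one.trans (one_le_budget i), bid_nonneg, sum_bid_le_budget,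
    fun i _ => EU_update_bid_le i, ?_, Prod.fst, ?_⟩
  · rw [LWs_eq_expectation]
    exact one_pos.trans_le (le_expectation _ fun a ha => one_le_liquidWelfare ha)
  · rw [LWs_eq_expectation]
    calc ((n + 2 : ℕ) : ℝ) / h * expectation _ bid (liquidWelfare (value h) (budget h))
        ≤ ((n + 2 : ℕ) : ℝ) / h * h := by
          gcongr
          exact expectation_le _ fun a ha => liquidWelfare_le ha
      _ = n + 2 := by
          rw [div_mul_cancel₀ _ (NeZero.ne (h : ℝ)), Nat.cast_add, Nat.cast_two]
      _ ≤ _ := by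
          simpa only [sum_shares] using le_sum_min_value_budget n h

/-- **Randomized tie-breaking, shares, `Ω(n/h)` lower bound**: for all `n ≥ 2`
and `1 ≤ h ≤ n` there are a share-model simultaneous first price auction with
`n` additive budgeted bidders, every item having `h` shares, a randomized
tie-breaking allocation rule, and a pure bid profile `b` which is a Nash
equilibrium in expectation, such that some allocation of the shares has Liquid
Welfare at least `(n/h) · LW(b)`, i.e. `OPT ≥ (n/h) · LW(b)`. -/
theorem randomized_tiebreak_shares_lpoa (n h : ℕ) (hn : 2 ≤ n) (hh : 1 ≤ h)
    (hhn : h ≤ n) :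
    ∃ (m : ℕ) (v : Fin n → Fin m → ℝ) (B : Fin n → ℝ)
      (R : RandShareRule n m h) (b : Fin n → Fin m × Fin h → ℝ),
      (∀ i j, 0 ≤ v i j) ∧ (∀ i, 0 ≤ B i) ∧ (∀ i g, 0 ≤ b i g) ∧
      (∀ i, (∑ g : Fin m × Fin h, b i g) ≤ B i) ∧
      (∀ i (c' : Fin m × Fin h → ℝ), (∀ g, 0 ≤ c' g) →
        (∑ g : Fin m × Fin h, c' g) ≤ B i →
        EU R v i (Function.update b i c') ≤ EU R v i b) ∧
      ∃ alloc : Fin m × Fin h → Fin n,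
        ((n : ℝ) / h) * LWs R v B b ≤
          ∑ i, min (∑ g ∈ univ.filter (fun g => alloc g = i), v i g.1 / h) (B i) := by
  obtain ⟨m, v, B, R, b, hv, hB, hb, hbB, hnash, -, hopt⟩ :=
    randomized_tiebreak_shares_lpoa_general n h hn hh
  exact ⟨m, v, B, R, b, hv, hB, hb, hbB, hnash, hopt⟩
end
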